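/- Let Ω be a bounded domain in ℂⁿ and K ⊂ Ω a compact complete pluripolar set. Then the relative extremal function u_K of K in Ω, defined as the supremum of all continuous plurisubharmonic functions u on Ω with u < 1 on Ω and u ≤ 0 on K, equals the characteristic function of Ω \ K. -/

import Mathlib

open Complex Topology Filter Metric MeasureTheory Set

noncomputable section

/-- Subharmonicity on a subset of `ℂ`: upper semicontinuity together with
majorization by real parts of holomorphic polynomials on closed discs
(the classical harmonic-majorant characterization). -/
def SubharmonicOn (u : ℂ → EReal) (s : Set ℂ) : Prop :=
  UpperSemicontinuousOn u s ∧
  ∀ (c : ℂ) (r : ℝ), 0 < r → Metric.closedBall c r ⊆ s →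
    ∀ p : Polynomial ℂ,
      (∀ z ∈ Metric.sphere c r, u z ≤ ((p.eval z).re : EReal)) →
      ∀ z ∈ Metric.closedBall c r, u z ≤ ((p.eval z).re : EReal)

/-- Plurisubharmonicity on a subset of a complex normed space:
upper semicontinuity and subharmonicity along every complex line. -/
def PlurisubharmonicOn {E : Type*} [NormedAddCommGroup E] [NormedSpace ℂ E]
    (u : E → EReal) (Ω : Set E) : Prop :=
  UpperSemicontinuousOn u Ω ∧
  ∀ z w : E, SubharmonicOn (fun t : ℂ => u (z + t • w)) {t : ℂ | z + t • w ∈ Ω}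

/-- A function is pluriharmonic on `Ω` if it is locally the real part of
a holomorphic function. -/
def PluriharmonicOn {E : Type*} [NormedAddCommGroup E] [NormedSpace ℂ E]
    (h : E → ℝ) (Ω : Set E) : Prop :=
  ∀ z ∈ Ω, ∃ U : Set E, IsOpen U ∧ z ∈ U ∧ U ⊆ Ω ∧
    ∃ f : E → ℂ, DifferentiableOn ℂ f U ∧ ∀ w ∈ U, h w = (f w).re

/-- `K` is complete pluripolar in `S`: every point of `K` has a neighborhood
`U ⊆ S` and a plurisubharmonic function `φ` on `U` with `K ∩ U = φ⁻¹(-∞)`. -/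
def CompletePluripolarIn {E : Type*} [NormedAddCommGroup E] [NormedSpace ℂ E]
    (K S : Set E) : Prop :=
  ∀ z ∈ K, ∃ U : Set E, IsOpen U ∧ z ∈ U ∧ U ⊆ S ∧
    ∃ φ : E → EReal, PlurisubharmonicOn φ U ∧ K ∩ U = {w ∈ U | φ w = ⊥}

/-- The Levi form of a real-valued function `φ` at `z` in the complex direction `v`:
`∂∂̄φ(z)(v,v̄)`, computed as one quarter of the Laplacian of `t ↦ φ (z + t v)` at `t = 0`. -/
def leviForm {E : Type*} [NormedAddCommGroup E] [NormedSpace ℂ E]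
    (φ : E → ℝ) (z v : E) : ℝ :=
  (1/4) * ((iteratedFDeriv ℝ 2 (fun t : ℂ => φ (z + t • v)) 0) ![1, 1]
        + (iteratedFDeriv ℝ 2 (fun t : ℂ => φ (z + t • v)) 0) ![Complex.I, Complex.I])

/-- The Wirtinger derivative `∂φ(z)(v) = Σ vⱼ ∂φ/∂zⱼ` of a real-valued function
in the complex direction `v`. -/
def wirtDeriv {E : Type*} [NormedAddCommGroup E] [NormedSpace ℂ E]
    (φ : E → ℝ) (z v : E) : ℂ :=
  (1/2 : ℂ) * ((fderiv ℝ φ z v : ℝ) - Complex.I * ((fderiv ℝ φ z (Complex.I • v) : ℝ) : ℂ))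

end

noncomputable section

/-- The majorization half of plurisubharmonicity: along complex lines, a real part of a
polynomial that dominates `f` on a circle dominates it on the disc. -/
def LineMajorized {E : Type*} [NormedAddCommGroup E] [NormedSpace ℂ E]
    (f : E → EReal) (U : Set E) : Prop :=
  ∀ (z w : E) (c : ℂ) (r : ℝ), 0 < r → (∀ τ ∈ closedBall c r, z + τ • w ∈ U) →
    ∀ p : Polynomial ℂ,
      (∀ τ ∈ sphere c r, f (z + τ • w) ≤ ((p.eval τ).re : EReal)) →
      ∀ τ ∈ closedBall c r, f (z + τ • w) ≤ ((p.eval τ).re : EReal)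

/-- The minimum principle for real parts of polynomials. -/
lemma le_re_eval_of_sphere {c : ℂ} {r b : ℝ} (hr : 0 < r) {p : Polynomial ℂ}
    (h : ∀ τ ∈ sphere c r, b ≤ (p.eval τ).re) :
    ∀ τ ∈ closedBall c r, b ≤ (p.eval τ).re := by
  intro τ hτ
  have hd : Differentiable ℂ (fun z => Complex.exp (-(p.eval z))) :=
    (p.differentiable.neg).cexp
  have key := Complex.norm_le_of_forall_mem_frontier_norm_le (U := ball c r)
    (f := fun z => Complex.exp (-(p.eval z))) (C := Real.exp (-b)) isBounded_ball
    hd.diffContOnCl (fun z hz => by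
      rw [frontier_ball c hr.ne'] at hz
      simpa [Complex.norm_exp] using h z hz)
    (z := τ) (by rwa [closure_ball c hr.ne'])
  simpa [Complex.norm_exp] using key

/-- Subharmonicity is a local property: for a continuous function, majorization at the centres
of arbitrarily small discs implies majorization on all discs. -/
lemma le_re_eval_of_local {u : ℂ → ℝ} {c : ℂ} {r : ℝ}
    (hu : ContinuousOn u (closedBall c r))
    (hloc : ∀ a ∈ ball c r, ∀ δ > 0, ∃ ρ > 0, ρ < δ ∧ ∀ p : Polynomial ℂ,
      (∀ z ∈ sphere a ρ, u z ≤ (p.eval z).re) → u a ≤ (p.eval a).re)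
    (p : Polynomial ℂ) (hp : ∀ z ∈ sphere c r, u z ≤ (p.eval z).re) :
    ∀ z ∈ closedBall c r, u z ≤ (p.eval z).re := by
  intro z₀ hz₀
  by_contra! hlt
  set d := u z₀ - (p.eval z₀).re with hd
  have hdpos : 0 < d := by linarith
  set ε := d / (2 * (r ^ 2 + 1)) with hε
  have hεpos : 0 < ε := by positivity
  have hεr : ε * r ^ 2 < d := by
    rw [hε, div_mul_eq_mul_div, div_lt_iff₀ (by positivity)]
    nlinarith [sq_nonneg r]
  have hcont : ContinuousOn (fun z => u z - (p.eval z).re + ε * ‖z - c‖ ^ 2)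
      (closedBall c r) := by
    refine (hu.sub ?_).add ?_
    · exact (Complex.continuous_re.comp p.continuous).continuousOn
    · fun_prop
  obtain ⟨a, ha, hmax⟩ := (isCompact_closedBall c r).exists_isMaxOn ⟨z₀, hz₀⟩ hcont
  rw [isMaxOn_iff] at hmax
  have haball : a ∈ ball c r := by
    rcases (mem_closedBall.1 ha).lt_or_eq with h | h
    · exact h
    · exfalso
      have h1 := hp a h
      have h2 := hmax z₀ hz₀
      have h3 : ‖a - c‖ = r := by rw [← dist_eq_norm, h]
      rw [h3] at h2
      nlinarith [sq_nonneg ‖z₀ - c‖]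
  have hac : dist a c < r := haball
  obtain ⟨ρ, hρ, hρlt, hmaj⟩ := hloc a haball (r - dist a c) (by linarith)
  set M := u a - (p.eval a).re + ε * ‖a - c‖ ^ 2 with hM
  set q : Polynomial ℂ := p - Polynomial.C (ε : ℂ) *
      (Polynomial.C ((‖a - c‖ ^ 2 : ℝ) : ℂ)
        + Polynomial.C (2 * (starRingEnd ℂ) (a - c)) * (Polynomial.X - Polynomial.C a))
      + Polynomial.C ((M - ε * ρ ^ 2 : ℝ) : ℂ) with hq
  have hqe : ∀ z, (q.eval z).re = (p.eval z).re - ε * (‖a - c‖ ^ 2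
      + 2 * ((starRingEnd ℂ) (a - c) * (z - a)).re) + (M - ε * ρ ^ 2) := by
    intro z
    simp only [hq, Polynomial.eval_add, Polynomial.eval_sub, Polynomial.eval_mul,
      Polynomial.eval_C, Polynomial.eval_X, Complex.add_re, Complex.sub_re,
      Complex.re_ofReal_mul, Complex.ofReal_re, mul_assoc]
    simp
  have h := hmaj q (fun z hz => by
    rw [hqe]
    have hz' : ‖z - a‖ = ρ := by rw [← dist_eq_norm]; exact hz
    have hzc : z ∈ closedBall c r := by
      rw [mem_closedBall]
      have := dist_triangle z a c
      rw [dist_eq_norm z a, hz'] at this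
      linarith
    have h1 := hmax z hzc
    have h2 : ‖z - c‖ ^ 2 = ‖a - c‖ ^ 2 + 2 * ((starRingEnd ℂ) (a - c) * (z - a)).re
        + ρ ^ 2 := by
      rw [← hz', ← Complex.normSq_eq_norm_sq, ← Complex.normSq_eq_norm_sq,
        ← Complex.normSq_eq_norm_sq]
      simp only [Complex.normSq_apply, Complex.sub_re, Complex.sub_im, Complex.mul_re,
        Complex.conj_re, Complex.conj_im, map_sub]
      ring
    nlinarith)
  rw [hqe] at h
  simp only [sub_self, mul_zero, Complex.zero_re] at h
  nlinarith [sq_nonneg ρ, mul_pos hεpos (pow_pos hρ 2)]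

section

variable {E : Type*} [NormedAddCommGroup E] [NormedSpace ℂ E]

lemma PlurisubharmonicOn.lineMajorized {f : E → EReal} {U V : Set E}
    (hf : PlurisubharmonicOn f U) (hVU : V ⊆ U) : LineMajorized f V :=
  fun z w c r hr hsub p hp τ hτ => (hf.2 z w).2 c r hr (fun t ht => hVU (hsub t ht)) p hp τ hτ

lemma LineMajorized.plurisubharmonicOn {f : E → ℝ} {U : Set E} (hc : ContinuousOn f U)
    (hf : LineMajorized (fun x => (f x : EReal)) U) :
    PlurisubharmonicOn (fun x => (f x : EReal)) U := by
  have hc' : ContinuousOn (fun x => (f x : EReal)) U :=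
    continuous_coe_real_ereal.comp_continuousOn hc
  refine ⟨hc'.upperSemicontinuousOn, fun z w => ⟨?_, fun c r hr hsub p hp τ hτ =>
    hf z w c r hr (fun t ht => hsub ht) p hp τ hτ⟩⟩
  refine ContinuousOn.upperSemicontinuousOn ?_
  exact hc'.comp (by fun_prop) (fun t ht => ht)

lemma lineMajorized_const (b : ℝ) (U : Set E) : LineMajorized (fun _ => (b : EReal)) U := by
  intro z w c r hr _ p hp τ hτ
  simp only [EReal.coe_le_coe_iff] at *
  exact le_re_eval_of_sphere hr hp τ hτ

lemma LineMajorized.sup {f g : E → EReal} {U : Set E} (hf : LineMajorized f U)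
    (hg : LineMajorized g U) : LineMajorized (fun x => max (f x) (g x)) U := by
  intro z w c r hr hU p hp τ hτ
  exact max_le (hf z w c r hr hU p (fun t ht => (le_max_left _ _).trans (hp t ht)) τ hτ)
    (hg z w c r hr hU p (fun t ht => (le_max_right _ _).trans (hp t ht)) τ hτ)

lemma LineMajorized.max_coe {f g : E → ℝ} {U : Set E}
    (hf : LineMajorized (fun x => (f x : EReal)) U)
    (hg : LineMajorized (fun x => (g x : EReal)) U) :
    LineMajorized (fun x => ((max (f x) (g x) : ℝ) : EReal)) U := by
  simpa only [EReal.coe_strictMono.monotone.map_max] using hf.sup hg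

lemma LineMajorized.const_mul_add {f : E → ℝ} {U : Set E} {α : ℝ} (hα : 0 < α) (β : ℝ)
    (hf : LineMajorized (fun x => (f x : EReal)) U) :
    LineMajorized (fun x => ((α * f x + β : ℝ) : EReal)) U := by
  intro z w c r hr hU p hp τ hτ
  have he : ∀ t, ((Polynomial.C ((α⁻¹ : ℝ) : ℂ) * (p - Polynomial.C (β : ℂ))).eval t).re
      = α⁻¹ * ((p.eval t).re - β) := by
    intro t
    simp only [Polynomial.eval_mul, Polynomial.eval_C, Polynomial.eval_sub,
      Complex.re_ofReal_mul, Complex.sub_re, Complex.ofReal_re]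
  have h := hf z w c r hr hU (Polynomial.C ((α⁻¹ : ℝ) : ℂ) * (p - Polynomial.C (β : ℂ)))
  simp only [EReal.coe_le_coe_iff, he, le_inv_mul_iff₀ hα] at h hp ⊢
  have := h (fun t ht => by linarith [hp t ht]) τ hτ
  linarith

/-- Regularization by sup-convolution: a nonpositive function satisfying the majorization
property, truncated at `-L * r`, has a continuous majorant with the same property. -/
lemma LineMajorized.exists_supConvolution {φ : E → EReal} {a : E} {r L : ℝ} (hr : 0 < r)
    (hL : 0 ≤ L) (hneg : ∀ y ∈ ball a (3 * r), φ y ≤ 0)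
    (hφ : LineMajorized φ (ball a (3 * r))) :
    ∃ f : E → ℝ, Continuous f ∧ (∀ x, f x ≤ 0) ∧
      (∀ x ∈ closedBall a r, φ x ≤ (f x : EReal)) ∧
      LineMajorized (fun x => (f x : EReal)) (ball a r) ∧
      ∀ (m η : ℝ) (x : E), m ≤ L * r → m ≤ L * η →
        (∀ y ∈ ball a (3 * r), dist y x < η → φ y ≤ ((-m : ℝ) : EReal)) → f x ≤ -m := by
  set S := closedBall a (2 * r) with hS
  have hSb : S ⊆ ball a (3 * r) := closedBall_subset_ball (by linarith)
  set ψ : E → ℝ := fun y => (max (φ y) ((-(L * r) : ℝ) : EReal)).toReal with hψ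
  have hcneg : -(L * r) ≤ 0 := by nlinarith
  have hψe : ∀ y ∈ ball a (3 * r), (ψ y : EReal) = max (φ y) ((-(L * r) : ℝ) : EReal) := by
    intro y hy
    refine EReal.coe_toReal ?_ ?_
    · refine ne_of_lt (lt_of_le_of_lt (max_le (hneg y hy) ?_) (EReal.coe_lt_top 0))
      exact_mod_cast hcneg
    · exact ne_of_gt (lt_of_lt_of_le (EReal.bot_lt_coe _) (le_max_right _ _))
  have hψ0 : ∀ y ∈ ball a (3 * r), ψ y ≤ 0 := by
    intro y hy
    have : (ψ y : EReal) ≤ ((0 : ℝ) : EReal) := by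
      rw [hψe y hy]
      exact max_le (hneg y hy) (by exact_mod_cast hcneg)
    exact_mod_cast this
  have hψc : ∀ y ∈ ball a (3 * r), -(L * r) ≤ ψ y := by
    intro y hy
    have : ((-(L * r) : ℝ) : EReal) ≤ (ψ y : EReal) := by
      rw [hψe y hy]
      exact le_max_right _ _
    exact_mod_cast this
  have hψmaj := hφ.sup (lineMajorized_const (-(L * r)) (ball a (3 * r)))
  have hSne : Nonempty S := ⟨⟨a, by simp [hS, hr.le]⟩⟩
  have hterm : ∀ (x : E) (y : S), ψ y - L * dist x y ≤ 0 := by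
    intro x y
    have := hψ0 y (hSb y.2)
    have := mul_nonneg hL (dist_nonneg (x := x) (y := (y : E)))
    linarith
  set f : E → ℝ := fun x => ⨆ y : S, (ψ y - L * dist x y) with hf
  have hbdd : ∀ x : E, BddAbove (Set.range fun y : S => ψ y - L * dist x y) := fun x =>
    ⟨0, by rintro _ ⟨y, rfl⟩; exact hterm x y⟩
  have hle : ∀ x, ∀ y ∈ S, ψ y - L * dist x y ≤ f x := fun x y hy =>
    le_ciSup (hbdd x) (⟨y, hy⟩ : S)
  have hψf : ∀ y ∈ S, ψ y ≤ f y := fun y hy => by simpa using hle y y hy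
  refine ⟨f, ?_, fun x => ciSup_le (hterm x), ?_, ?_, ?_⟩
  · refine (LipschitzWith.of_le_add_mul ⟨L, hL⟩ fun x y => ciSup_le fun s => ?_).continuous
    have h1 := hle y s s.2
    have h2 := mul_le_mul_of_nonneg_left (dist_triangle y x s) hL
    rw [dist_comm y x] at h2
    change ψ s - L * dist x s ≤ f y + L * dist x y
    linarith
  · intro x hx
    have hxS : x ∈ S := closedBall_subset_closedBall (by linarith) hx
    have h1 : (ψ x : EReal) ≤ (f x : EReal) := by exact_mod_cast hψf x hxS
    rw [hψe x (hSb hxS)] at h1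
    exact (le_max_left _ _).trans h1
  · intro z w c ρ hρ hsub p hp τ hτ
    have hshift : ∀ v : E, ‖v‖ ≤ r → ψ (z + τ • w + v) - L * ‖v‖ ≤ (p.eval τ).re := by
      intro v hv
      have hin : ∀ t ∈ closedBall c ρ, (z + v) + t • w ∈ S := by
        intro t ht
        have h1 := mem_ball.1 (hsub t ht)
        rw [hS, mem_closedBall, show z + v + t • w = v + (z + t • w) by abel]
        calc dist (v + (z + t • w)) a ≤ dist (v + (z + t • w)) (z + t • w) + dist (z + t • w) a :=
              dist_triangle _ _ _
          _ ≤ 2 * r := by rw [dist_eq_norm (v + _)]; simp only [add_sub_cancel_right]; linarith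
      have h := hψmaj (z + v) w c ρ hρ (fun t ht => hSb (hin t ht))
        (p + Polynomial.C ((L * ‖v‖ : ℝ) : ℂ)) (fun t ht => by
          have htc := sphere_subset_closedBall ht
          beta_reduce
          rw [← hψe _ (hSb (hin t htc)), EReal.coe_le_coe_iff]
          have h1 := hle (z + t • w) _ (hin t htc)
          have h2 : f (z + t • w) ≤ (p.eval t).re := EReal.coe_le_coe_iff.1 (hp t ht)
          rw [show z + v + t • w = z + t • w + v by abel] at h1 ⊢
          rw [dist_self_add_right] at h1
          simp only [Polynomial.eval_add, Polynomial.eval_C, Complex.add_re, Complex.ofReal_re]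
          linarith) τ hτ
      beta_reduce at h
      rw [← hψe _ (hSb (hin τ hτ)), EReal.coe_le_coe_iff] at h
      simp only [Polynomial.eval_add, Polynomial.eval_C, Complex.add_re, Complex.ofReal_re] at h
      rw [show z + v + τ • w = z + τ • w + v by abel] at h
      linarith
    rw [EReal.coe_le_coe_iff]
    refine ciSup_le fun y => ?_
    rcases le_or_gt (dist (z + τ • w) y) r with h | h
    · have := hshift (y - (z + τ • w)) (by rwa [← dist_eq_norm, dist_comm])
      rwa [add_sub_cancel, ← dist_eq_norm, dist_comm] at this
    · have h1 := hshift 0 (by simpa using hr.le)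
      simp only [add_zero, norm_zero, mul_zero, sub_zero] at h1
      have h2 := hψc _ (ball_subset_ball (by linarith) (hsub τ hτ))
      have h3 := hψ0 y (hSb y.2)
      have h4 := mul_le_mul_of_nonneg_left h.le hL
      linarith
  · intro m η x hmr hmη hφm
    refine ciSup_le fun y => ?_
    rcases lt_or_ge (dist (y : E) x) η with h | h
    · have h1 : (ψ y : EReal) ≤ ((-m : ℝ) : EReal) := by
        rw [hψe _ (hSb y.2)]
        exact max_le (hφm y (hSb y.2) h) (by exact_mod_cast (by linarith))
      have h2 : ψ y ≤ -m := by exact_mod_cast h1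
      have := mul_nonneg hL (dist_nonneg (x := x) (y := (y : E)))
      linarith
    · have h3 := hψ0 y (hSb y.2)
      have h4 := mul_le_mul_of_nonneg_left h hL
      rw [dist_comm] at h4
      linarith

lemma UpperSemicontinuousOn.isOpen_sep_lt {α β : Type*} [TopologicalSpace α] [Preorder β]
    {f : α → β} {s : Set α} (hf : UpperSemicontinuousOn f s) (hs : IsOpen s) (b : β) :
    IsOpen {x ∈ s | f x < b} := by
  obtain ⟨u, hu, h⟩ := upperSemicontinuousOn_iff_preimage_Iio.1 hf b
  have : {x ∈ s | f x < b} = s ∩ u := h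
  rw [this]
  exact hs.inter hu

/-- `φ` is nonpositive on `B`, satisfies the conditions for plurisubharmonicity there, and has
`K` as its set of poles in `B`. -/
structure IsPoleFunction (φ : E → EReal) (K B : Set E) : Prop where
  usc : UpperSemicontinuousOn φ B
  majorized : LineMajorized φ B
  nonpos : ∀ x ∈ B, φ x ≤ 0
  mem_iff : ∀ x ∈ B, x ∈ K ↔ φ x = ⊥

/-- A compact complete pluripolar set admits pole functions on all balls of some fixed radius. -/
lemma CompletePluripolarIn.exists_radius {K S : Set E} (hK : IsCompact K)
    (hpp : CompletePluripolarIn K S) :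
    ∃ r > 0, ∀ a, ∃ φ, IsPoleFunction φ K (ball a (3 * r)) := by
  choose! U hUo hzU _ φ hφ hKU using hpp
  set V : K → Set E := fun x => {y ∈ U x | φ x y < 0} with hV
  have hKV : K ⊆ ⋃ x, V x := by
    intro x hx
    refine mem_iUnion.2 ⟨⟨x, hx⟩, hzU x hx, ?_⟩
    have : x ∈ {w ∈ U x | φ x w = ⊥} := hKU x hx ▸ ⟨hx, hzU x hx⟩
    rw [this.2]
    exact EReal.bot_lt_zero
  obtain ⟨δ, hδ, hleb⟩ := lebesgue_number_lemma_of_metric (c := V) hK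
    (fun x => (hφ x x.2).1.isOpen_sep_lt (hUo x x.2) 0) hKV
  refine ⟨δ / 6, by positivity, fun a => ?_⟩
  by_cases hdisj : ∃ x ∈ K, x ∈ ball a (3 * (δ / 6))
  · obtain ⟨x, hxK, hxa⟩ := hdisj
    obtain ⟨i, hi⟩ := hleb x hxK
    have hsub : ball a (3 * (δ / 6)) ⊆ V i := by
      refine (ball_subset_ball' ?_).trans hi
      rw [dist_comm]
      linarith [mem_ball.1 hxa]
    have hsubU : ball a (3 * (δ / 6)) ⊆ U i := fun y hy => (hsub hy).1
    refine ⟨φ i, (hφ i i.2).1.mono hsubU, (hφ i i.2).lineMajorized hsubU,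
      fun y hy => (hsub hy).2.le, fun y hy => ?_⟩
    have h := Set.ext_iff.1 (hKU i i.2) y
    simp only [mem_inter_iff, mem_ofPred_eq] at h
    have := hsubU hy
    tauto
  · refine ⟨fun _ => ((0 : ℝ) : EReal), continuousOn_const.upperSemicontinuousOn,
      lineMajorized_const _ _, by simp, fun y hy => ?_⟩
    simp only [EReal.coe_ne_bot, iff_false]
    exact fun hyK => hdisj ⟨y, hyK, hy⟩

lemma IsPoleFunction.exists_continuous_of_notMem {φ : E → EReal} {K : Set E} {a z : E}
    {r m ε : ℝ} (hr : 0 < r) (hK : IsCompact K) (hφ : IsPoleFunction φ K (ball a (3 * r)))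
    (hz : z ∈ closedBall a r) (hzK : z ∉ K) (hm : 0 < m) (hε : 0 < ε) :
    ∃ s : E → ℝ, Continuous s ∧ (∀ x, s x ≤ 0) ∧
      LineMajorized (fun x => (s x : EReal)) (ball a r) ∧
      (∀ x ∈ K ∩ closedBall a r, s x ≤ -m) ∧ -ε < s z := by
  have hsub : closedBall a r ⊆ ball a (3 * r) := closedBall_subset_ball (by linarith)
  obtain ⟨b, hb⟩ : ∃ b : ℝ, (b : EReal) = φ z := by
    refine ⟨(φ z).toReal, EReal.coe_toReal ?_ fun h => hzK ((hφ.mem_iff z (hsub hz)).2 h)⟩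
    exact ne_of_lt (lt_of_le_of_lt (hφ.nonpos z (hsub hz)) EReal.zero_lt_top)
  have hb0 : b ≤ 0 := by
    have := hφ.nonpos z (hsub hz)
    rw [← hb] at this
    exact_mod_cast this
  set l := ε / (1 - b) with hl
  have hlpos : 0 < l := div_pos hε (by linarith)
  have hlb : l * (1 - b) = ε := div_mul_cancel₀ _ (by linarith)
  set V := {x ∈ ball a (3 * r) | φ x < ((-(m / l) : ℝ) : EReal)} with hV
  have hVo : IsOpen V := hφ.usc.isOpen_sep_lt isOpen_ball _
  have hKV : K ∩ closedBall a r ⊆ V := fun x hx =>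
    ⟨hsub hx.2, by rw [(hφ.mem_iff x (hsub hx.2)).1 hx.1]; exact EReal.bot_lt_coe _⟩
  obtain ⟨η, hη, hthick⟩ :=
    (hK.inter_right isClosed_closedBall).exists_thickening_subset_open hVo hKV
  set L := max (m / l / r) (m / l / η) with hL
  have hL0 : 0 ≤ L := le_max_of_le_left (by positivity)
  obtain ⟨f, hfc, hf0, hφf, hfm, hfK⟩ :=
    hφ.majorized.exists_supConvolution hr hL0 hφ.nonpos
  refine ⟨fun x => l * f x + 0, by fun_prop, fun x => ?_, hfm.const_mul_add hlpos 0,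
    fun x hx => ?_, ?_⟩
  · nlinarith [hf0 x]
  · have := hfK (m / l) η x ((div_le_iff₀ hr).1 (le_max_left _ _))
      ((div_le_iff₀ hη).1 (le_max_right _ _)) (fun y _ hyx =>
        (hthick (mem_thickening_iff.2 ⟨x, hx, hyx⟩)).2.le)
    have h2 := mul_le_mul_of_nonneg_left this hlpos.le
    rw [mul_neg, mul_div_cancel₀ _ hlpos.ne'] at h2
    linarith
  · have h1 : b ≤ f z := by
      have := hφf z hz
      rw [← hb] at this
      exact_mod_cast this
    have := mul_le_mul_of_nonneg_left h1 hlpos.le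
    linarith

lemma IsPoleFunction.exists_continuous_of_disjoint {φ : E → EReal} {K L : Set E} {a : E}
    {r m ε : ℝ} (hr : 0 < r) (hK : IsCompact K) (hφ : IsPoleFunction φ K (ball a (3 * r)))
    (hL : IsCompact L) (hLa : L ⊆ closedBall a r) (hLK : Disjoint L K) (hm : 0 < m)
    (hε : 0 < ε) :
    ∃ s : E → ℝ, Continuous s ∧ (∀ x, s x ≤ 0) ∧
      LineMajorized (fun x => (s x : EReal)) (ball a r) ∧
      (∀ x ∈ K ∩ closedBall a r, s x ≤ -m) ∧ ∀ x ∈ L, -ε ≤ s x := by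
  refine hL.induction_on ?_ ?_ ?_ ?_
  · exact ⟨fun _ => -m, continuous_const, fun _ => by linarith, lineMajorized_const _ _,
      fun _ _ => le_rfl, by simp⟩
  · rintro A B hAB ⟨s, hs, h0, hmaj, hsK, hsB⟩
    exact ⟨s, hs, h0, hmaj, hsK, fun x hx => hsB x (hAB hx)⟩
  · rintro A B ⟨s, hs, h0, hmaj, hsK, hsA⟩ ⟨t, ht, h0', hmaj', htK, htB⟩
    refine ⟨fun x => max (s x) (t x), hs.max ht, fun x => max_le (h0 x) (h0' x),
      hmaj.max_coe hmaj', fun x hx => max_le (hsK x hx) (htK x hx), fun x hx => ?_⟩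
    rcases hx with hx | hx
    · exact le_max_of_le_left (hsA x hx)
    · exact le_max_of_le_right (htB x hx)
  · intro z hz
    obtain ⟨s, hs, h0, hmaj, hsK, hsz⟩ := hφ.exists_continuous_of_notMem hr hK (hLa hz)
      (disjoint_left.1 hLK hz) hm hε
    exact ⟨{x | -ε < s x}, mem_nhdsWithin_of_mem_nhds
      ((isOpen_lt continuous_const hs).mem_nhds hsz), s, hs, h0, hmaj, hsK, fun x hx => hx.le⟩

/-- Local functions of depth `M` on `K`, whose mutual differences are bounded independently
of `M`. -/
lemma exists_comparable_family [ProperSpace E] {K : Set E} {r : ℝ} (hr : 0 < r)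
    (hK : IsCompact K) (hφ : ∀ a, ∃ φ, IsPoleFunction φ K (ball a (3 * r))) (I : Finset E)
    (M : ℕ) (N : Set E) (hN : IsOpen N) (hKN : K ⊆ N) :
    ∃ v : E → E → ℝ, (∀ a, Continuous (v a)) ∧
      (∀ a, LineMajorized (fun x => (v a x : EReal)) (ball a r)) ∧
      (∀ a x, v a x ≤ 0) ∧ (∀ a x, -(M : ℝ) ≤ v a x) ∧
      (∀ a, ∀ x ∈ closedBall a r, x ∉ N → -1 ≤ v a x) ∧
      (∀ a, ∀ x ∈ K ∩ closedBall a r, v a x ≤ -M) ∧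
      ∀ a ∈ I, ∀ b ∈ I, ∀ x ∈ closedBall a r, x ∈ closedBall b r → v a x ≤ v b x + 2 := by
  induction M generalizing N with
  | zero =>
    exact ⟨fun _ _ => 0, fun _ => continuous_const, fun _ => lineMajorized_const 0 _,
      by simp, by simp, by simp, by simp, by simp⟩
  | succ M ih =>
    choose φ hφ using hφ
    choose s hs h0 hmaj hsK hsL using fun a =>
      (hφ a).exists_continuous_of_disjoint hr hK (m := M + 2) (ε := 1)
        ((isCompact_closedBall a r).diff hN) sdiff_subset
        (disjoint_left.2 fun x hx hxK => hx.2 (hKN hxK)) (by positivity) one_pos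
    set N' : Set E := ⋂ a ∈ I, ({x | s a x < -(M + 1 : ℝ)} ∪ (closedBall a r)ᶜ) with hN'
    have hN'o : IsOpen N' := isOpen_biInter_finset fun a _ =>
      (isOpen_lt (hs a) continuous_const).union isClosed_closedBall.isOpen_compl
    have hKN' : K ⊆ N' := by
      intro x hx
      refine mem_iInter₂.2 fun a _ => ?_
      by_cases hxa : x ∈ closedBall a r
      · left
        have := hsK a x ⟨hx, hxa⟩
        simp only [mem_ofPred_eq]
        linarith
      · exact Or.inr hxa
    obtain ⟨v, hv, hvmaj, hv0, hvM, hvN, hvK, hvv⟩ := ih N' hN'o hKN'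
    refine ⟨fun a x => max (s a x) (1 * v a x + (-1)), fun a => (hs a).max (by fun_prop),
      fun a => (hmaj a).max_coe ((hvmaj a).const_mul_add one_pos _), fun a x => ?_,
      fun a x => ?_, fun a x hx hxN => ?_, fun a x hx => ?_, fun a ha b hb x hxa hxb => ?_⟩
    · exact max_le (h0 a x) (by linarith [hv0 a x])
    · refine le_max_of_le_right ?_
      push_cast
      linarith [hvM a x]
    · exact le_max_of_le_left (hsL a x ⟨hx, hxN⟩)
    · push_cast
      exact max_le (by linarith [hsK a x hx]) (by linarith [hvK a x hx])
    · have hb' : 1 * v b x + (-1) ≤ max (s b x) (1 * v b x + (-1)) := le_max_right _ _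
      by_cases hxN : x ∈ N'
      · have h1 := (mem_iInter₂.1 hxN a ha).resolve_right (fun h => h hxa)
        simp only [mem_ofPred_eq] at h1
        refine max_le ?_ ?_
        · linarith [hvM b x]
        · linarith [hvv a ha b hb x hxa hxb]
      · have h1 := hvN b x hxb hxN
        refine max_le ?_ ?_
        · linarith [h0 a x]
        · linarith [hv0 a x]

end

/-- The squared Euclidean norm on `ℂⁿ`. -/
def sqNorm {n : ℕ} (x : Fin n → ℂ) : ℝ := ∑ i, ‖x i‖ ^ 2

section

variable {n : ℕ}

@[fun_prop]
lemma continuous_sqNorm : Continuous (sqNorm (n := n)) := by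
  unfold sqNorm
  fun_prop

lemma sqNorm_nonneg (x : Fin n → ℂ) : 0 ≤ sqNorm x :=
  Finset.sum_nonneg fun _ _ => by positivity

lemma mem_ball_of_sqNorm_lt {x a : Fin n → ℂ} {r : ℝ} (hr : 0 < r)
    (h : sqNorm (x - a) < r ^ 2) : x ∈ ball a r := by
  rw [mem_ball, dist_pi_lt_iff hr]
  intro i
  rw [dist_eq_norm]
  refine lt_of_pow_lt_pow_left₀ 2 hr.le (lt_of_le_of_lt ?_ h)
  exact Finset.single_le_sum (f := fun i => ‖(x - a) i‖ ^ 2) (fun _ _ => by positivity)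
    (Finset.mem_univ i)

/-- Along complex lines, `‖x‖² - ‖x - a‖²` is the real part of a polynomial. -/
lemma exists_polynomial_sqNorm_sub (a z w : Fin n → ℂ) :
    ∃ q : Polynomial ℂ, ∀ t : ℂ,
      (q.eval t).re = sqNorm (z + t • w) - sqNorm (z + t • w - a) := by
  refine ⟨∑ i, (Polynomial.C (2 * (starRingEnd ℂ) (a i)) *
    (Polynomial.C (z i) + Polynomial.X * Polynomial.C (w i))
      - Polynomial.C ((‖a i‖ ^ 2 : ℝ) : ℂ)), fun t => ?_⟩
  rw [Polynomial.eval_finsetSum, Complex.re_sum, sqNorm, sqNorm, ← Finset.sum_sub_distrib]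
  refine Finset.sum_congr rfl fun i _ => ?_
  simp only [Polynomial.eval_sub, Polynomial.eval_mul, Polynomial.eval_C, Polynomial.eval_add,
    Polynomial.eval_X, Complex.sub_re, Complex.ofReal_re, Pi.add_apply, Pi.smul_apply,
    Pi.sub_apply, smul_eq_mul, ← Complex.normSq_eq_norm_sq, Complex.normSq_apply, Complex.mul_re,
    Complex.mul_im, Complex.add_re, Complex.add_im, Complex.sub_im, Complex.conj_re,
    Complex.conj_im, Complex.re_ofNat, Complex.im_ofNat]
  ring

/-- Gluing of local functions whose mutual differences are at most `2`. The maximum of the local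
functions, weighted by quadratic bumps, is globally plurisubharmonic. -/
lemma exists_glued {Ω : Set (Fin n → ℂ)} {r M : ℝ} (hr : 0 < r) (hM : 0 ≤ M)
    {I : Finset (Fin n → ℂ)} (hI : I.Nonempty)
    (hcover : ∀ x ∈ Ω, ∃ b ∈ I, sqNorm (x - b) < r ^ 2 / 16)
    {v : (Fin n → ℂ) → (Fin n → ℂ) → ℝ} (hv : ∀ a, Continuous (v a))
    (hmaj : ∀ a, LineMajorized (fun x => (v a x : EReal)) (ball a r))
    (hv0 : ∀ a x, v a x ≤ 0) (hvM : ∀ a x, -M ≤ v a x)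
    (hvv : ∀ a ∈ I, ∀ b ∈ I, ∀ x ∈ closedBall a r, x ∈ closedBall b r → v a x ≤ v b x + 2) :
    ∃ G : (Fin n → ℂ) → ℝ, Continuous G ∧ LineMajorized (fun x => (G x : EReal)) Ω ∧
      (∀ x ∈ Ω, ∃ a ∈ I, x ∈ closedBall a r ∧ G x ≤ v a x + 16 / r ^ 2 * sqNorm x) ∧
      ∀ x ∈ Ω, ∃ b ∈ I, x ∈ closedBall b r ∧ v b x - 1 ≤ G x := by
  set A := 16 / r ^ 2 with hA
  have hr2 : 0 < r ^ 2 := by positivity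
  have hA0 : 0 < A := by positivity
  have hAr : A * r ^ 2 = 16 := div_mul_cancel₀ _ hr2.ne'
  set B := 2 * M / r ^ 2 with hB
  have hB0 : 0 ≤ B := by positivity
  have hBr : B * r ^ 2 = 2 * M := div_mul_cancel₀ _ hr2.ne'
  set g : (Fin n → ℂ) → (Fin n → ℂ) → ℝ := fun a x =>
    v a x + A * (sqNorm x - sqNorm (x - a)) - B * max 0 (sqNorm (x - a) - r ^ 2 / 4) with hg
  have hgc : ∀ a, Continuous (g a) := by
    intro a
    have := hv a
    fun_prop
  have hg_le : ∀ a x, g a x ≤ v a x + A * (sqNorm x - sqNorm (x - a)) := fun a x => by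
    have := mul_nonneg hB0 (le_max_left 0 (sqNorm (x - a) - r ^ 2 / 4))
    simp only [hg]
    linarith
  have hg_eq : ∀ a x, sqNorm (x - a) ≤ r ^ 2 / 4 →
      g a x = v a x + A * (sqNorm x - sqNorm (x - a)) := fun a x h => by
    simp only [hg]
    rw [max_eq_left (by linarith), mul_zero, sub_zero]
  set G : (Fin n → ℂ) → ℝ := fun x => I.sup' hI fun a => g a x with hG
  have hGc : Continuous G := Continuous.finset_sup'_apply hI fun a _ => hgc a
  have hgG : ∀ a ∈ I, ∀ x, g a x ≤ G x := fun a ha x =>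
    Finset.le_sup' (fun a => g a x) ha
  have hbest : ∀ x ∈ Ω, ∃ a ∈ I, sqNorm (x - a) < r ^ 2 / 4 ∧ G x = g a x := by
    intro x hx
    obtain ⟨a, ha, hGa⟩ := Finset.exists_mem_eq_sup' hI fun a => g a x
    by_cases hxa : sqNorm (x - a) < r ^ 2 / 4
    · exact ⟨a, ha, hxa, hGa⟩
    push Not at hxa
    obtain ⟨b, hb, hxb⟩ := hcover x hx
    refine ⟨b, hb, by linarith, le_antisymm (hGa.le.trans ?_) (hgG b hb x)⟩
    rw [hg_eq b x (by linarith)]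
    have hbA := mul_lt_mul_of_pos_left hxb hA0
    rcases lt_or_ge (sqNorm (x - a)) (r ^ 2) with h | h
    · have h1 := hvv a ha b hb x (ball_subset_closedBall (mem_ball_of_sqNorm_lt hr h))
        (ball_subset_closedBall (mem_ball_of_sqNorm_lt hr (by linarith)))
      have h2 := hg_le a x
      have h3 := mul_le_mul_of_nonneg_left hxa hA0.le
      linarith
    · simp only [hg]
      rw [max_eq_right (by linarith)]
      have h1 := hv0 a x
      have h2 := hvM b x
      have h3 := mul_le_mul_of_nonneg_left h hA0.le
      have h4 := mul_le_mul_of_nonneg_left h hB0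
      linarith
  refine ⟨G, hGc, ?_, fun x hx => ?_, fun x hx => ?_⟩
  · intro z w c ρ hρ hsub p hp τ hτ
    simp only [EReal.coe_le_coe_iff] at hp ⊢
    refine le_re_eval_of_local (u := fun t => G (z + t • w)) (by fun_prop) ?_ p hp τ hτ
    intro α hα δ hδ
    obtain ⟨a, ha, haα, hGa⟩ := hbest _ (hsub α (ball_subset_closedBall hα))
    have hopen : IsOpen {t : ℂ | sqNorm (z + t • w - a) < r ^ 2 / 4} :=
      isOpen_lt (by fun_prop) continuous_const
    obtain ⟨δ', hδ', hball⟩ := Metric.isOpen_iff.1 hopen α haα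
    have hmin : 0 < min δ δ' := lt_min hδ hδ'
    have hσδ' : min δ δ' / 2 < δ' := by linarith [min_le_right δ δ']
    have hin : ∀ t ∈ closedBall α (min δ δ' / 2), sqNorm (z + t • w - a) < r ^ 2 / 4 :=
      fun t ht => hball (closedBall_subset_ball hσδ' ht)
    refine ⟨min δ δ' / 2, by positivity, by linarith [min_le_left δ δ'], fun q hq => ?_⟩
    obtain ⟨q', hq'⟩ := exists_polynomial_sqNorm_sub a z w
    have he : ∀ t, ((q - Polynomial.C (A : ℂ) * q').eval t).re
        = (q.eval t).re - A * (sqNorm (z + t • w) - sqNorm (z + t • w - a)) := by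
      intro t
      simp only [Polynomial.eval_sub, Polynomial.eval_mul, Polynomial.eval_C, Complex.sub_re,
        Complex.re_ofReal_mul, hq']
    have h := hmaj a z w α (min δ δ' / 2) (by positivity)
      (fun t ht => mem_ball_of_sqNorm_lt hr (by linarith [hin t ht]))
      (q - Polynomial.C (A : ℂ) * q')
    simp only [EReal.coe_le_coe_iff, he] at h
    have h' := h (fun t ht => by
      have h1 := hg_eq a _ (hin t (sphere_subset_closedBall ht)).le
      have h2 := hgG a ha (z + t • w)
      have h3 := hq t ht
      linarith) α (mem_closedBall_self (by positivity))
    rw [hGa, hg_eq a _ haα.le]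
    linarith
  · obtain ⟨a, ha, hxa, hGa⟩ := hbest x hx
    refine ⟨a, ha, ball_subset_closedBall (mem_ball_of_sqNorm_lt hr (by linarith)), ?_⟩
    have := mul_nonneg hA0.le (sqNorm_nonneg (x - a))
    rw [hGa]
    linarith [hg_le a x]
  · obtain ⟨b, hb, hxb⟩ := hcover x hx
    refine ⟨b, hb, ball_subset_closedBall (mem_ball_of_sqNorm_lt hr (by linarith)), ?_⟩
    have h1 := hgG b hb x
    rw [hg_eq b x (by linarith)] at h1
    have := mul_nonneg hA0.le (sqNorm_nonneg x)
    have := mul_lt_mul_of_pos_left hxb hA0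
    linarith

/-- Off a compact complete pluripolar set there are competitors for the relative extremal
function with values arbitrarily close to `1`. -/
lemma exists_competitor {Ω K : Set (Fin n → ℂ)} (hΩ : Bornology.IsBounded Ω)
    (hK : IsCompact K) (hKΩ : K ⊆ Ω) (hpp : CompletePluripolarIn K Ω) {z : Fin n → ℂ}
    (hz : z ∈ Ω) (hzK : z ∉ K) {ε : ℝ} (hε : 0 < ε) :
    ∃ u : (Fin n → ℂ) → ℝ, PlurisubharmonicOn (fun w => (u w : EReal)) Ω ∧ ContinuousOn u Ω ∧
      (∀ w ∈ Ω, u w < 1) ∧ (∀ w ∈ K, u w ≤ 0) ∧ 1 - ε < u z := by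
  obtain ⟨r, hr, hφ⟩ := hpp.exists_radius hK
  have hr2 : 0 < r ^ 2 / 16 := by positivity
  obtain ⟨I, hIcover⟩ := hΩ.isCompact_closure.elim_finite_subcover
    (fun b : Fin n → ℂ => {x | sqNorm (x - b) < r ^ 2 / 16})
    (fun b => isOpen_lt (by fun_prop) continuous_const)
    (fun x _ => mem_iUnion.2 ⟨x, by simpa [sqNorm] using hr2⟩)
  have hcover : ∀ x ∈ Ω, ∃ b ∈ I, sqNorm (x - b) < r ^ 2 / 16 := fun x hx => by
    simpa using hIcover (subset_closure hx)
  have hI : I.Nonempty := let ⟨b, hb, _⟩ := hcover z hz; ⟨b, hb⟩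
  obtain ⟨C, hC⟩ := (hΩ.isCompact_closure.image
    (f := fun x => 16 / r ^ 2 * sqNorm x) (by fun_prop)).bddAbove
  have hCΩ : ∀ x ∈ Ω, 16 / r ^ 2 * sqNorm x ≤ C := fun x hx =>
    hC (mem_image_of_mem _ (subset_closure hx))
  obtain ⟨k, hk⟩ := exists_nat_gt ((C + 3) / ε)
  have hC0 : 0 ≤ C := (mul_nonneg (by positivity) (sqNorm_nonneg z)).trans (hCΩ z hz)
  have hkpos : (0 : ℝ) < k := lt_of_le_of_lt (by positivity) hk
  obtain ⟨v, hv, hmaj, hv0, hvM, hvN, hvK, hvv⟩ := exists_comparable_family hr hK hφ I k {z}ᶜ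
    isOpen_compl_singleton (fun x hx hxz => hzK (hxz ▸ hx))
  obtain ⟨G, hGc, hGmaj, hGle, hleG⟩ :=
    exists_glued hr hkpos.le hI hcover hv hmaj hv0 hvM hvv
  have hkinv : 0 < (k : ℝ)⁻¹ := inv_pos.2 hkpos
  refine ⟨fun x => (k : ℝ)⁻¹ * G x + (1 - (k : ℝ)⁻¹ * (C + 1)),
    (hGmaj.const_mul_add hkinv _).plurisubharmonicOn (by fun_prop), by fun_prop,
    fun x hx => ?_, fun x hx => ?_, ?_⟩
  · obtain ⟨a, -, -, hGa⟩ := hGle x hx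
    have : G x < C + 1 := by linarith [hv0 a x, hCΩ x hx]
    linarith [mul_lt_mul_of_pos_left this hkinv]
  · obtain ⟨a, -, hxa, hGa⟩ := hGle x (hKΩ hx)
    have : G x ≤ C + 1 - k := by linarith [hvK a x ⟨hx, hxa⟩, hCΩ x (hKΩ hx)]
    have := mul_le_mul_of_nonneg_left this hkinv.le
    rw [mul_sub, inv_mul_cancel₀ hkpos.ne'] at this
    linarith
  · obtain ⟨b, -, hzb, hGb⟩ := hleG z hz
    have h1 : -2 ≤ G z := by linarith [hvN b z hzb (by simp)]
    have h2 := mul_le_mul_of_nonneg_left h1 hkinv.le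
    have h3 : (k : ℝ)⁻¹ * (C + 3) < ε := by
      rw [inv_mul_lt_iff₀ hkpos, ← div_lt_iff₀ hε]
      exact hk
    linarith

end

end

open Classical

/-- The relative extremal function of a compact complete pluripolar set `K` in a
bounded domain `Ω ⊆ ℂⁿ` equals the characteristic function of `Ω \ K`. -/
theorem relative_extremal_eq_indicator
    {n : ℕ} {Ω K : Set (Fin n → ℂ)}
    (hΩopen : IsOpen Ω) (hΩconn : IsConnected Ω) (hΩbdd : Bornology.IsBounded Ω)
    (hKcpt : IsCompact K) (hKΩ : K ⊆ Ω) (hKpp : CompletePluripolarIn K Ω) :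
    ∀ z ∈ Ω,
      sSup {t : ℝ | ∃ u : (Fin n → ℂ) → ℝ,
          PlurisubharmonicOn (fun w => (u w : EReal)) Ω ∧ ContinuousOn u Ω ∧
          (∀ w ∈ Ω, u w < 1) ∧ (∀ w ∈ K, u w ≤ 0) ∧ t = u z}
        = (if z ∈ K then 0 else 1) := by
  intro z hz
  have hle : ∀ t ∈ {t : ℝ | ∃ u : (Fin n → ℂ) → ℝ,
      PlurisubharmonicOn (fun w => (u w : EReal)) Ω ∧ ContinuousOn u Ω ∧
      (∀ w ∈ Ω, u w < 1) ∧ (∀ w ∈ K, u w ≤ 0) ∧ t = u z}, t ≤ if z ∈ K then 0 else 1 := by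
    rintro t ⟨u, -, -, hu1, hu0, rfl⟩
    split_ifs with h
    · exact hu0 z h
    · exact (hu1 z hz).le
  refine IsLUB.csSup_eq ⟨hle, fun b hb => ?_⟩ ⟨0, fun _ => 0,
    (lineMajorized_const 0 Ω).plurisubharmonicOn continuousOn_const, continuousOn_const,
    by simp, by simp, rfl⟩
  split_ifs with h
  · exact hb ⟨fun _ => 0, (lineMajorized_const 0 Ω).plurisubharmonicOn continuousOn_const,
      continuousOn_const, by simp, by simp, rfl⟩
  · refine le_of_forall_pos_sub_le fun ε hε => ?_
    obtain ⟨u, hpsh, hc, h1, h0, hu⟩ := exists_competitor hΩbdd hKcpt hKΩ hKpp hz h hε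
    exact hu.le.trans (hb ⟨u, hpsh, hc, h1, h0, rfl⟩)
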